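/- Define f : ℕ → ℕ by f(w) = ⌈w/2⌉ + 1. Then for every w ≥ 1 and every n ≥ Nat.clog 2 w + 1 (i.e. n at least one more than the ceiling of the base-2 logarithm of w), the n-th iterate satisfies f^[n](w) ∈ {2, 3}. -/

import Mathlib

/-- The causal-cone width-update function of a binary MERA: `f(w) = ⌈w/2⌉ + 1`. -/
noncomputable def widthStep (w : ℕ) : ℕ := ⌈(w : ℚ) / 2⌉₊ + 1

/-!
A step halves the excess `w - 2` of the width over the fixed point `2` and rounds up. Nested
roundings up collapse into one, so `n` steps take the excess to `⌈(w - 2) / 2 ^ n⌉`, which is `0` or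
`1` exactly when `-1 < (w - 2) / 2 ^ n ≤ 1`.
-/

theorem ceil_ceil_div_natCast {K : Type*} [Field K] [LinearOrder K] [IsStrictOrderedRing K]
    [FloorRing K] (a : K) (n : ℕ) : ⌈(⌈a⌉ : K) / n⌉ = ⌈a / n⌉ := by
  obtain rfl | hn := n.eq_zero_or_pos
  · simp
  have hn' : (0 : K) < n := Nat.cast_pos.mpr hn
  refine eq_of_forall_ge_iff fun z ↦ ?_
  calc ⌈(⌈a⌉ : K) / n⌉ ≤ z
      ↔ (⌈a⌉ : K) ≤ (z * n : ℤ) := by rw [Int.ceil_le, div_le_iff₀ hn']; norm_cast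
    _ ↔ a ≤ (z * n : ℤ) := by rw [Int.cast_le, Int.ceil_le]
    _ ↔ ⌈a / n⌉ ≤ z := by rw [Int.ceil_le, div_le_iff₀ hn']; norm_cast

theorem widthStep_eq_ceil (w : ℕ) : (widthStep w : ℤ) = ⌈((w : ℚ) - 2) / 2⌉ + 2 := by
  have h_nonneg : (0 : ℚ) ≤ w / 2 := by positivity
  rw [widthStep, Nat.cast_add_one, Int.natCast_ceil_eq_ceil h_nonneg, sub_div, div_self two_ne_zero,
    Int.ceil_sub_one]
  ring

theorem widthStep_iterate_eq_ceil (n w : ℕ) :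
    (widthStep^[n] w : ℤ) = ⌈((w : ℚ) - 2) / 2 ^ n⌉ + 2 := by
  induction n with
  | zero => simp
  | succ n ih =>
    have h_excess : ((widthStep^[n] w : ℕ) : ℚ) - 2 = ⌈((w : ℚ) - 2) / 2 ^ n⌉ := by
      rw [sub_eq_iff_eq_add]
      exact_mod_cast ih
    have h_ceil : ⌈(⌈((w : ℚ) - 2) / 2 ^ n⌉ : ℚ) / 2⌉ = ⌈((w : ℚ) - 2) / 2 ^ n / 2⌉ :=
      mod_cast ceil_ceil_div_natCast (((w : ℚ) - 2) / 2 ^ n) 2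
    rw [Function.iterate_succ_apply', widthStep_eq_ceil, h_excess, h_ceil, div_div, ← pow_succ]

theorem widthStep_iterate_mem_iff (w n : ℕ) :
    widthStep^[n] w ∈ ({2, 3} : Set ℕ) ↔ 2 < w + 2 ^ n ∧ w ≤ 2 ^ n + 2 := by
  have h_pow : (0 : ℚ) < 2 ^ n := by positivity
  have h_formula := widthStep_iterate_eq_ceil n w
  calc widthStep^[n] w ∈ ({2, 3} : Set ℕ)
      ↔ -1 < ⌈((w : ℚ) - 2) / 2 ^ n⌉ ∧ ⌈((w : ℚ) - 2) / 2 ^ n⌉ ≤ 1 := by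
        rw [Set.mem_insert_iff, Set.mem_singleton_iff]; omega
    _ ↔ -1 < ((w : ℚ) - 2) / 2 ^ n ∧ ((w : ℚ) - 2) / 2 ^ n ≤ 1 := by
        rw [Int.lt_ceil, Int.ceil_le]; norm_num
    _ ↔ (2 : ℚ) < w + 2 ^ n ∧ (w : ℚ) ≤ 2 ^ n + 2 := by
        rw [lt_div_iff₀ h_pow, div_le_one h_pow, neg_one_mul, neg_lt_sub_iff_lt_add',
          sub_le_iff_le_add]
    _ ↔ 2 < w + 2 ^ n ∧ w ≤ 2 ^ n + 2 := by norm_cast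

/-- After at least `⌈log₂ w⌉ + 1` coarse-graining steps, the causal cone of a region of
`w ≥ 1` sites in a binary MERA has width 2 or 3. -/
theorem widthStep_iterate_mem (w : ℕ) (hw : 1 ≤ w) (n : ℕ) (hn : Nat.clog 2 w + 1 ≤ n) :
    widthStep^[n] w ∈ ({2, 3} : Set ℕ) := by
  have h_upper : w ≤ 2 ^ n := (Nat.clog_le_iff_le_pow one_lt_two).mp (by omega)
  have h_lower : 2 ≤ 2 ^ n := le_self_pow₀ one_le_two (by omega)
  exact (widthStep_iterate_mem_iff w n).mpr ⟨by omega, by omega⟩
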